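/- (Proposition 2: stationary MDP with restricted permutation set Π₄.) Take 𝒴 = 𝒞 and suppose the law of the data has probability mass function f(d) = μ(c₁) · ∏_{t=1}^{T−1} 1[y_t = c_{t+1}] · ∏_{t=1}^T a_t(x_t; c_t, h_{t−1}(d)) · P(y_t; c_t, x_t), where μ : 𝒞 → ℝ≥0 is the initial-state distribution and P : 𝒞 × 𝒞 × 𝒳 → ℝ≥0 is a time-homogeneous transition density (stationary MDP: the response y_t is the next state c_{t+1}). Assume the null hypothesis H₀^{⊥⊥,g}: for all y, c ∈ 𝒞 and all x, x' ∈ 𝒳 with g(x) = g(x'), P(y; c, x) = P(y; c, x'). Fix a trajectory d with y_t = c_{t+1} for all t ∈ {1, …, T−1}, and define Π₄ = {π a permutation of {1,…,T} : y_{π(t)} = c_{π(t+1)} for all t ∈ {1,…,T−1}, and c_{π(1)} = c₁}. Then for every π ∈ Π₄ and every trajectory d̃ with (c̃_t, g(x̃_t), ỹ_t) = (c_{π(t)}, g(x_{π(t)}), y_{π(t)}) for all t ∈ {1, …, T} (such d̃ automatically satisfies ỹ_t = c̃_{t+1} for t < T), one has f(d̃) = K(d) · f̂(d̃), where K(d)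 = μ(c₁) · ∏_{t=1}^T P(y_t; c_t, x_t) depends only on d (not on π or d̃). -/

import Mathlib

open scoped NNReal Classical BigOperators

noncomputable section

variable {C X G : Type*}

/-- Embedding of an index `s < t` into `Fin T`. -/
def emb {T : ℕ} (t : Fin T) (s : Fin (t : ℕ)) : Fin T :=
  ⟨(s : ℕ), lt_trans s.isLt t.isLt⟩

/-- The history `h_{t−1}(d)`: the prefix of the trajectory strictly before time `t`. -/
def hist {T : ℕ} (d : Fin T → C × X × C) (t : Fin T) : Fin (t : ℕ) → C × X × C :=
  fun s => d (emb t s)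

/-- The unnormalized assignment likelihood
`f̂(d) = ∏_{t=1}^T a_t(x_t; c_t, h_{t−1}(d))`. -/
def assignLik {T : ℕ} (a : (t : Fin T) → X → C → (Fin (t : ℕ) → C × X × C) → ℝ≥0)
    (d : Fin T → C × X × C) : ℝ≥0 :=
  ∏ t, a t (d t).2.1 (d t).1 (hist d t)

/-- The indicator `∏_{t=1}^{T−1} 1[y_t = c_{t+1}]` enforcing the MDP structure
(the response at time `t` is the next state). -/
def chainInd {T : ℕ} (d : Fin T → C × X × C) : ℝ≥0 :=
  ∏ t : Fin T,
    if h : (t : ℕ) + 1 < T then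
      (if (d t).2.2 = (d ⟨(t : ℕ) + 1, h⟩).1 then 1 else 0)
    else 1

/-- The law of a stationary MDP trajectory:
`f(d) = μ(c₁) · ∏_{t<T} 1[y_t = c_{t+1}] · ∏_t a_t(x_t; c_t, h_{t−1}(d)) · P(y_t; c_t, x_t)`. -/
def mdpLaw {T : ℕ} (hT : 0 < T) (μ : C → ℝ≥0)
    (a : (t : Fin T) → X → C → (Fin (t : ℕ) → C × X × C) → ℝ≥0)
    (P : C → C → X → ℝ≥0)
    (d : Fin T → C × X × C) : ℝ≥0 :=
  μ (d ⟨0, hT⟩).1 * chainInd d *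
    ∏ t, a t (d t).2.1 (d t).1 (hist d t) * P (d t).2.2 (d t).1 (d t).2.1

/-- The response at each time is the state at the next time, `y_t = c_{t+1}` for `t < T`.
Times run over `Fin T`, so the paper's time `1` is `0` here. For `d ∘ π` this is the first of the
two conditions that define `π ∈ Π₄`. -/
def IsChained {T : ℕ} (d : Fin T → C × X × C) : Prop :=
  ∀ (t : Fin T) (ht : (t : ℕ) + 1 < T), (d t).2.2 = (d ⟨(t : ℕ) + 1, ht⟩).1

/-- The data `d'` has the states and responses of the data `d` and the same `g`-values of actions.
With `d` replaced by `d ∘ π`, this is the relation between the resample `d̃` and `d`. -/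
def AgreesUpTo {ι Y : Type*} (g : X → G) (d' d : ι → C × X × Y) : Prop :=
  ∀ i, (d' i).1 = (d i).1 ∧ g (d' i).2.1 = g (d i).2.1 ∧ (d' i).2.2 = (d i).2.2

theorem chainInd_eq_one {T : ℕ} {d : Fin T → C × X × C} (hd : IsChained d) : chainInd d = 1 := by
  refine Finset.prod_eq_one fun t _ => ?_
  split_ifs with ht hchain
  · rfl
  · exact absurd (hd t ht) hchain
  · rfl

theorem mdpLaw_eq_mul_assignLik {T : ℕ} (hT : 0 < T) (μ : C → ℝ≥0)
    (a : (t : Fin T) → X → C → (Fin (t : ℕ) → C × X × C) → ℝ≥0) (P : C → C → X → ℝ≥0)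
    {d : Fin T → C × X × C} (hd : IsChained d) :
    mdpLaw hT μ a P d =
      (μ (d ⟨0, hT⟩).1 * ∏ t, P (d t).2.2 (d t).1 (d t).2.1) * assignLik a d := by
  rw [mdpLaw, assignLik, chainInd_eq_one hd, Finset.prod_mul_distrib]
  ring

theorem IsChained.of_agreesUpTo {T : ℕ} {g : X → G} {d d' : Fin T → C × X × C}
    (hd : IsChained d) (h : AgreesUpTo g d' d) : IsChained d' := fun t ht =>
  calc (d' t).2.2 = (d t).2.2 := (h t).2.2
    _ = (d ⟨(t : ℕ) + 1, ht⟩).1 := hd t ht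
    _ = (d' ⟨(t : ℕ) + 1, ht⟩).1 := (h _).1.symm

theorem AgreesUpTo.prod_transition_eq {ι Y M : Type*} [Fintype ι] [CommMonoid M] {g : X → G}
    {P : Y → C → X → M} (hP : ∀ y c, (P y c).FactorsThrough g) {d d' : ι → C × X × Y}
    (h : AgreesUpTo g d' d) :
    ∏ i, P (d' i).2.2 (d' i).1 (d' i).2.1 = ∏ i, P (d i).2.2 (d i).1 (d i).2.1 := by
  refine Fintype.prod_congr _ _ fun i => ?_
  obtain ⟨state_eq, action_eq, response_eq⟩ := h i
  rw [state_eq, response_eq, hP _ _ action_eq]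

theorem prop2_stationary_mdp_general {T : ℕ} (hT : 0 < T) (μ : C → ℝ≥0)
    (a : (t : Fin T) → X → C → (Fin (t : ℕ) → C × X × C) → ℝ≥0)
    {P : C → C → X → ℝ≥0} {g : X → G} (hP : ∀ y c, (P y c).FactorsThrough g)
    {d d' : Fin T → C × X × C} {π : Equiv.Perm (Fin T)} (hπ : IsChained (d ∘ π))
    (hinit : (d (π ⟨0, hT⟩)).1 = (d ⟨0, hT⟩).1) (h : AgreesUpTo g d' (d ∘ π)) :
    mdpLaw hT μ a P d' =
      (μ (d ⟨0, hT⟩).1 * ∏ t, P (d t).2.2 (d t).1 (d t).2.1) * assignLik a d' := by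
  have initial_state_eq : (d' ⟨0, hT⟩).1 = (d ⟨0, hT⟩).1 := (h _).1.trans hinit
  have transition_prod_eq : ∏ t, P (d' t).2.2 (d' t).1 (d' t).2.1 =
      ∏ t, P (d t).2.2 (d t).1 (d t).2.1 :=
    (h.prod_transition_eq hP).trans (Equiv.prod_comp π fun t => P (d t).2.2 (d t).1 (d t).2.1)
  rw [mdpLaw_eq_mul_assignLik hT μ a P (hπ.of_agreesUpTo h), initial_state_eq, transition_prod_eq]

/-- **(Proposition 2: stationary MDP with the restricted permutation set `Π₄`.)**
Under the null `H₀^{⊥⊥,g}`, for every permutation `π ∈ Π₄` and every resample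
`d̃` agreeing with the `π`-permuted data in states, next states, and
`g`-evaluations of actions, one has `f(d̃) = K(d) · f̂(d̃)`. -/
theorem prop2_stationary_mdp
    [Countable C] [Countable X]
    (T : ℕ) (hT : 0 < T) (μ : C → ℝ≥0)
    (a : (t : Fin T) → X → C → (Fin (t : ℕ) → C × X × C) → ℝ≥0)
    (P : C → C → X → ℝ≥0)
    (g : X → G)
    (hnull : ∀ (y c : C) (x x' : X), g x = g x' → P y c x = P y c x')
    (d : Fin T → C × X × C)
    (hd : ∀ (t : Fin T) (ht : (t : ℕ) + 1 < T),
      (d t).2.2 = (d ⟨(t : ℕ) + 1, ht⟩).1) :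
    ∀ π : Equiv.Perm (Fin T),
      (∀ (t : Fin T) (ht : (t : ℕ) + 1 < T),
        (d (π t)).2.2 = (d (π ⟨(t : ℕ) + 1, ht⟩)).1) →
      (d (π ⟨0, hT⟩)).1 = (d ⟨0, hT⟩).1 →
      ∀ dtil : Fin T → C × X × C,
        (∀ t, (dtil t).1 = (d (π t)).1 ∧ g (dtil t).2.1 = g (d (π t)).2.1 ∧
          (dtil t).2.2 = (d (π t)).2.2) →
        mdpLaw hT μ a P dtil =
          (μ (d ⟨0, hT⟩).1 * ∏ t, P (d t).2.2 (d t).1 (d t).2.1) *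
            assignLik a dtil := by
  intro π hπ hinit dtil h
  exact prop2_stationary_mdp_general hT μ a (fun y c x x' => hnull y c x x') hπ hinit h
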